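/- Let D ≥ 2, L ≥ 1, N ≥ 1 be integers, let the lattice be the D-dimensional discrete torus (ℤ/Lℤ)^D with K = L^D sites, and let the edge set be E = sites × {1,…,D}. Let μ_N be the product over E of the Haar probability measures on the unitary group U(N), let t be the normalized Wilson action t(U) = (1/K) Σ_{x} Σ_{μ<ν} (1/N) Re Tr(U_{x,ν}† U_{x+ν,μ}† U_{x+μ,ν} U_{x,μ}), and let ρ_N be the pushforward of μ_N under t. Then the rescaled probability measures ρ_N(N·t), i.e. the pushforwards of ρ_N under the map t ↦ N·t (equivalently, the pushforwards of μ_N under N·t), converge weakly as N → ∞ to the centered Gaussian measure on ℝ with density √(2K/(π D(D−1))) · exp(−2K t²/(D(D−1))), i.e. the Gaussian with mean 0 and variance D(D−1)/(4K). -/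

import Mathlib

open MeasureTheory Matrix Finset Filter ProbabilityTheory
open scoped NNReal

noncomputable section

/-- Borel measurable structure on the unitary group `U(N)`. -/
instance (N : ℕ) : MeasurableSpace (Matrix.unitaryGroup (Fin N) ℂ) := borel _

instance (N : ℕ) : BorelSpace (Matrix.unitaryGroup (Fin N) ℂ) := ⟨rfl⟩

/-- Sites of the `D`-dimensional periodic lattice of side `L`: the discrete torus `(ℤ/Lℤ)^D`. -/
abbrev Site (D L : ℕ) := Fin D → ZMod L

/-- Edges: a site together with a positive coordinate direction. -/
abbrev Edge (D L : ℕ) := Site D L × Fin D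

/-- Lattice gauge configurations: a unitary matrix `U_{x,μ} ∈ U(N)` on every edge. -/
abbrev Conf (D L N : ℕ) := Edge D L → Matrix.unitaryGroup (Fin N) ℂ

/-- The site displaced one step from `x` in direction `μ`. -/
def shift {D L : ℕ} (x : Site D L) (μ : Fin D) : Site D L :=
  Function.update x μ (x μ + 1)

/-- The normalized Wilson action
`t(U) = (1/K) Σ_x Σ_{μ<ν} (1/N) Re Tr (U_{x,ν}† U_{x+ν,μ}† U_{x+μ,ν} U_{x,μ})`, with `K = L^D`. -/
def wilsonAction (D L N : ℕ) [NeZero L] (U : Conf D L N) : ℝ :=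
  ((L : ℝ) ^ D)⁻¹ *
    ∑ x : Site D L, ∑ p ∈ Finset.univ.filter (fun p : Fin D × Fin D => p.1 < p.2),
      (N : ℝ)⁻¹ *
        (Matrix.trace ((U (x, p.2) : Matrix (Fin N) (Fin N) ℂ)ᴴ
          * (U (shift x p.2, p.1) : Matrix (Fin N) (Fin N) ℂ)ᴴ
          * (U (shift x p.1, p.2) : Matrix (Fin N) (Fin N) ℂ)
          * (U (x, p.1) : Matrix (Fin N) (Fin N) ℂ))).re

/-- The product over all edges of the measure `haarU` on `U(N)`. -/
def confMeasure (D L N : ℕ) [NeZero L]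
    (haarU : Measure (Matrix.unitaryGroup (Fin N) ℂ)) : Measure (Conf D L N) :=
  Measure.pi fun _ => haarU

/-!
Integration by parts against Haar measure, tested on the matrix entries of a word `w` at an
edge `e`, gives the Schwinger–Dyson equations: the sum over the ways of splitting `w` at `e` into
two words, of the products of their traces, is balanced by the sum of the traces obtained by merging
`w` at `e` into the test function. For a cyclically reduced `w` starting with `e`, the trivial
splitting contributes `N` times the trace of `w`, and all others involve only nontrivial words. By
induction on the length, testing on the trace of `w⁻¹` bounds the traces of nontrivial words in
`L²`, uniformly in `N`.

Up to a constant, the Wilson action is a sum of traces over oriented plaquettes. Now test on the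
exponential of `z` times this sum. Merging a plaquette into its opposite gives the trivial word,
with trace `N`; the other mergings and nontrivial splittings are bounded in `L¹` uniformly in `N`.
After division by `N`, the characteristic function `φ` of the rescaled action satisfies
`φ' s + v s φ s = O((1 + |s|) / N)` for the expected variance `v`, which forces convergence to the
Gaussian.
-/

/-! ### Uniform bounds in `L^p` -/

section UniformBounds

open scoped ENNReal

lemma integrable_of_continuous {X E : Type*} [TopologicalSpace X] [CompactSpace X]
    [MeasurableSpace X] [OpensMeasurableSpace X] [NormedAddCommGroup E] {P : Measure X}
    [IsFiniteMeasureOnCompacts P] {f : X → E} (hf : Continuous f) : Integrable f P :=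
  hf.integrable_of_hasCompactSupport (.of_compactSpace f)

lemma lpNorm_two_sq {X E : Type*} [MeasurableSpace X] [NormedAddCommGroup E] {P : Measure X}
    {f : X → E} (hf : AEStronglyMeasurable f P) : lpNorm f 2 P ^ 2 = ∫ x, ‖f x‖ ^ 2 ∂P := by
  rw [lpNorm_eq_integral_norm_rpow_toReal two_ne_zero ENNReal.ofNat_ne_top hf,
    ← Real.rpow_mul_natCast (integral_nonneg fun x => by positivity)]
  simp

variable {J : Type*} {Ω : J → Type*} [∀ j, MeasurableSpace (Ω j)]

/-- A family of functions on varying measure spaces which is bounded in `L^p`, uniformly in the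
index. It is used for functions of the gauge field indexed by the matrix size. -/
def UniformlyBoundedLp {E : Type*} [NormedAddCommGroup E] (F : ∀ j, Ω j → E) (p : ℝ≥0∞)
    (P : ∀ j, Measure (Ω j)) : Prop :=
  ∃ C : ℝ≥0, ∀ j, AEStronglyMeasurable (F j) (P j) ∧ eLpNorm (F j) p (P j) ≤ C

namespace UniformlyBoundedLp

variable {E : Type*} [NormedAddCommGroup E] {p q : ℝ≥0∞} {P : ∀ j, Measure (Ω j)}
  {F G : ∀ j, Ω j → E}

protected lemma zero : UniformlyBoundedLp (fun _ _ => 0 : ∀ j, Ω j → E) p P :=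
  ⟨0, fun _ => ⟨aestronglyMeasurable_const, by simp⟩⟩

protected lemma add (hF : UniformlyBoundedLp F p P) (hG : UniformlyBoundedLp G p P)
    (hp : 1 ≤ p) : UniformlyBoundedLp (fun j ω => F j ω + G j ω) p P := by
  obtain ⟨A, hA⟩ := hF
  obtain ⟨B, hB⟩ := hG
  refine ⟨A + B, fun j => ⟨(hA j).1.add (hB j).1, ?_⟩⟩
  push_cast
  exact (eLpNorm_add_le (hA j).1 (hB j).1 hp).trans (add_le_add (hA j).2 (hB j).2)

lemma list_sum {α : Type*} {l : List α} {F : α → ∀ j, Ω j → E} (hp : 1 ≤ p)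
    (hF : ∀ c ∈ l, UniformlyBoundedLp (F c) p P) :
    UniformlyBoundedLp (fun j ω => (l.map fun c => F c j ω).sum) p P := by
  induction l with
  | nil => exact .zero
  | cons c l ih =>
    simpa only [List.map_cons, List.sum_cons] using
      (hF c List.mem_cons_self).add (ih fun d hd => hF d (List.mem_cons_of_mem c hd)) hp

lemma finset_sum {α : Type*} {s : Finset α} {F : α → ∀ j, Ω j → E} (hp : 1 ≤ p)
    (hF : ∀ c ∈ s, UniformlyBoundedLp (F c) p P) :
    UniformlyBoundedLp (fun j ω => ∑ c ∈ s, F c j ω) p P := by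
  simpa only [Finset.sum_map_toList] using
    list_sum hp fun c hc => hF c (Finset.mem_toList.1 hc)

lemma mono_exponent [∀ j, IsProbabilityMeasure (P j)] (hF : UniformlyBoundedLp F q P)
    (hpq : p ≤ q) : UniformlyBoundedLp F p P := by
  obtain ⟨C, hC⟩ := hF
  exact ⟨C, fun j =>
    ⟨(hC j).1, (eLpNorm_le_eLpNorm_of_exponent_le hpq (hC j).1).trans (hC j).2⟩⟩

lemma of_norm_le {E' : Type*} [NormedAddCommGroup E'] {G : ∀ j, Ω j → E'} {C : ℝ}
    (hF : UniformlyBoundedLp F p P) (hG : ∀ j, AEStronglyMeasurable (G j) (P j))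
    (hGF : ∀ j ω, ‖G j ω‖ ≤ C * ‖F j ω‖) :
    UniformlyBoundedLp G p P := by
  obtain ⟨A, hA⟩ := hF
  refine ⟨C.toNNReal * A, fun j => ⟨hG j, ?_⟩⟩
  refine (eLpNorm_le_nnreal_smul_eLpNorm_of_ae_le_mul (c := C.toNNReal) (g := F j)
    (.of_forall fun ω => ?_) p).trans ?_
  · rw [← NNReal.coe_le_coe]
    exact (hGF j ω).trans (mul_le_mul_of_nonneg_right (Real.le_coe_toNNReal C) (norm_nonneg _))
  · rw [ENNReal.smul_def, smul_eq_mul, ENNReal.coe_mul]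
    exact mul_le_mul_right (hA j).2 _

protected lemma mul {R : Type*} [NormedRing R] {F G : ∀ j, Ω j → R} {r : ℝ≥0∞}
    [p.HolderTriple q r] (hF : UniformlyBoundedLp F p P) (hG : UniformlyBoundedLp G q P) :
    UniformlyBoundedLp (fun j ω => F j ω * G j ω) r P := by
  obtain ⟨A, hA⟩ := hF
  obtain ⟨B, hB⟩ := hG
  refine ⟨A * B, fun j => ⟨(hA j).1.mul (hB j).1, ?_⟩⟩
  rw [ENNReal.coe_mul]
  exact (eLpNorm_smul_le_mul_eLpNorm (hB j).1 (hA j).1).trans (mul_le_mul' (hA j).2 (hB j).2)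

lemma exists_norm_integral_mul_le {F : ∀ j, Ω j → ℂ} (hF : UniformlyBoundedLp F 1 P) :
    ∃ C : ℝ≥0, ∀ j (f : Ω j → ℂ), (∀ ω, ‖f ω‖ ≤ 1) → ‖∫ ω, f ω * F j ω ∂P j‖ ≤ C := by
  obtain ⟨C, hC⟩ := hF
  refine ⟨C, fun j f hf => ?_⟩
  have h : ‖∫ ω, f ω * F j ω ∂P j‖ₑ ≤ C := calc
    _ ≤ ∫⁻ ω, ‖f ω * F j ω‖ₑ ∂P j := enorm_integral_le_lintegral_enorm _
    _ ≤ ∫⁻ ω, ‖F j ω‖ₑ ∂P j := lintegral_mono fun ω => by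
        rw [enorm_mul]
        exact mul_le_of_le_one_left' (ENNReal.coe_le_one_iff.2 (hf ω))
    _ ≤ C := by simpa [eLpNorm_one_eq_lintegral_enorm] using (hC j).2
  exact ENNReal.coe_le_coe.1 h

lemma of_integral_norm_sq_le {E' : Type*} [NormedAddCommGroup E'] {G : ∀ j, Ω j → E'} {k : ℝ}
    (hG : UniformlyBoundedLp G 2 P) (hF : ∀ j, MemLp (F j) 2 (P j))
    (h : ∀ j, ∫ ω, ‖F j ω‖ ^ 2 ∂P j ≤ ∫ ω, ‖F j ω‖ * ‖G j ω‖ ∂P j + k) :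
    UniformlyBoundedLp F 2 P := by
  obtain ⟨C, hC⟩ := hG
  refine ⟨(Real.sqrt (C ^ 2 + 2 * k)).toNNReal, fun j => ⟨(hF j).1, ?_⟩⟩
  have hGj : MemLp (G j) 2 (P j) := ⟨(hC j).1, (hC j).2.trans_lt ENNReal.coe_lt_top⟩
  have hGC : lpNorm (G j) 2 (P j) ≤ C := by
    simpa [← toReal_eLpNorm hGj.1] using ENNReal.toReal_mono ENNReal.coe_ne_top (hC j).2
  have amgm : ∫ ω, ‖F j ω‖ * ‖G j ω‖ ∂P j ≤ ∫ ω, (‖F j ω‖ ^ 2 + ‖G j ω‖ ^ 2) / 2 ∂P j :=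
    integral_mono_of_nonneg (.of_forall fun ω => by positivity)
      (((hF j).integrable_norm_pow two_ne_zero).add
        (hGj.integrable_norm_pow two_ne_zero) |>.div_const 2)
      (.of_forall fun ω => by nlinarith only [sq_nonneg (‖F j ω‖ - ‖G j ω‖)])
  rw [integral_div, integral_add ((hF j).integrable_norm_pow two_ne_zero)
    (hGj.integrable_norm_pow two_ne_zero), ← lpNorm_two_sq (hF j).1, ← lpNorm_two_sq hGj.1] at amgm
  have hj := h j
  rw [← lpNorm_two_sq (hF j).1] at hj
  have hsq : lpNorm (G j) 2 (P j) ^ 2 ≤ C ^ 2 := pow_le_pow_left₀ lpNorm_nonneg hGC 2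
  rw [← ofReal_lpNorm (hF j)]
  exact ENNReal.ofReal_le_ofReal (Real.le_sqrt_of_sq_le (by linarith))

end UniformlyBoundedLp

end UniformBounds

/-! ### Words in unitary matrices -/

section Unitary

open scoped Matrix.Norms.L2Operator

variable {n : Type*} [Fintype n] [DecidableEq n]

instance : CompactSpace (unitaryGroup n ℂ) := by
  refine isCompact_iff_compactSpace.1 (Metric.isCompact_of_isClosed_isBounded
    (isClosed_unitary (R := Matrix n n ℂ)) ?_)
  rcases subsingleton_or_nontrivial (Matrix n n ℂ) with h | h
  · exact Bornology.IsBounded.all _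
  · exact isBounded_iff_forall_norm_le.2 ⟨1, fun U hU => (CStarRing.norm_of_mem_unitary hU).le⟩

instance : SecondCountableTopology (unitaryGroup n ℂ) :=
  TopologicalSpace.Subtype.secondCountableTopology _

end Unitary

section Words

variable {ι n : Type*} [Fintype n] [DecidableEq n]

/-- The matrix obtained by evaluating a free group element at a family of unitaries. -/
def wordMatrix (U : ι → unitaryGroup n ℂ) (g : FreeGroup ι) : Matrix n n ℂ :=
  (FreeGroup.lift U g : unitaryGroup n ℂ)

/-- The trace of a word in a family of unitaries: a Wilson loop, when the word is a closed path. -/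
def wordTrace (U : ι → unitaryGroup n ℂ) (g : FreeGroup ι) : ℂ :=
  (wordMatrix U g).trace

variable (U : ι → unitaryGroup n ℂ) (g h : FreeGroup ι)

lemma wordMatrix_one : wordMatrix U 1 = 1 := by
  simp [wordMatrix]

lemma wordMatrix_mul : wordMatrix U (g * h) = wordMatrix U g * wordMatrix U h := by
  simp [wordMatrix]

lemma wordMatrix_mk_cons (l : ι × Bool) (w : List (ι × Bool)) :
    wordMatrix U (FreeGroup.mk (l :: w)) =
      wordMatrix U (FreeGroup.mk [l]) * wordMatrix U (FreeGroup.mk w) := by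
  rw [← wordMatrix_mul, FreeGroup.mul_mk, List.singleton_append]

lemma wordMatrix_inv : wordMatrix U g⁻¹ = (wordMatrix U g)ᴴ := by
  rw [wordMatrix, map_inv]
  rfl

lemma wordTrace_one : wordTrace U 1 = Fintype.card n := by
  rw [wordTrace, wordMatrix_one, trace_one]

lemma wordTrace_inv : wordTrace U g⁻¹ = starRingEnd ℂ (wordTrace U g) := by
  rw [wordTrace, wordMatrix_inv, trace_conjTranspose, wordTrace, starRingEnd_apply]

lemma wordTrace_mul_comm : wordTrace U (g * h) = wordTrace U (h * g) := by
  rw [wordTrace, wordMatrix_mul, trace_mul_comm, ← wordMatrix_mul, wordTrace]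

lemma wordTrace_conj : wordTrace U (g * h * g⁻¹) = wordTrace U h := by
  rw [wordTrace_mul_comm, inv_mul_cancel_left]

lemma norm_wordTrace_eq_of_isConj (hgh : IsConj g h ∨ IsConj g h⁻¹) :
    ‖wordTrace U g‖ = ‖wordTrace U h‖ := by
  obtain hgh | hgh := hgh <;> obtain ⟨c, hc⟩ := isConj_iff.1 hgh
  · rw [← hc, wordTrace_conj]
  · rw [← RCLike.norm_conj (wordTrace U h), ← wordTrace_inv, ← hc, wordTrace_conj]

lemma norm_wordTrace_le : ‖wordTrace U g‖ ≤ Fintype.card n := calc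
  ‖wordTrace U g‖ ≤ ∑ i, ‖wordMatrix U g i i‖ := norm_sum_le _ _
  _ ≤ ∑ _i : n, (1 : ℝ) :=
    sum_le_sum fun i _ => entry_norm_bound_of_unitary (FreeGroup.lift U g).2 i i
  _ = Fintype.card n := by simp

@[fun_prop]
lemma continuous_wordMatrix : Continuous fun U : ι → unitaryGroup n ℂ => wordMatrix U g := by
  refine continuous_subtype_val.comp ?_
  induction g using FreeGroup.induction_on with
  | C1 => simpa only [map_one] using continuous_const
  | of i => simpa only [FreeGroup.lift_apply_of] using continuous_apply i
  | inv_of i h => simpa only [map_inv] using h.fun_inv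
  | mul x y hx hy => simpa only [map_mul] using hx.fun_mul hy

@[fun_prop]
lemma continuous_wordTrace : Continuous fun U : ι → unitaryGroup n ℂ => wordTrace U g :=
  (continuous_wordMatrix g).matrix_trace

end Words

/-! ### Cutting words -/

/-- A splitting of a word into two subwords, with a sign; see `cuts`. -/
structure Cut (ι : Type*) where
  sign : ℤˣ
  left : List (ι × Bool)
  right : List (ι × Bool)

section Cuts

variable {ι : Type*} [DecidableEq ι]

/-- The signed ways of cutting a word at an occurrence of the letter `e`: immediately before
an occurrence of `e`, with sign `1`, or immediately after one of `e⁻¹`, with sign `-1`. They index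
the terms in the derivative of a word under left translation of the unitary at `e`. -/
def cuts (e : ι) : List (ι × Bool) → List (Cut ι)
  | [] => []
  | l :: w => (if l.1 = e then [bif l.2 then ⟨1, [], l :: w⟩ else ⟨-1, [l], w⟩] else []) ++
      (cuts e w).map fun c => ⟨c.sign, l :: c.left, c.right⟩

lemma mem_cuts {e : ι} {w : List (ι × Bool)} {c : Cut ι} :
    c ∈ cuts e w ↔ c.left ++ c.right = w ∧
      (c.sign = 1 ∧ c.right.head? = some (e, true) ∨
        c.sign = -1 ∧ c.left.getLast? = some (e, false)) := by
  induction w generalizing c with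
  | nil =>
    obtain ⟨s, a, b⟩ := c
    simp only [cuts, List.not_mem_nil, false_iff, List.append_eq_nil_iff]
    rintro ⟨⟨rfl, rfl⟩, h⟩
    simp at h
  | cons l w ih =>
    obtain ⟨s, a, b⟩ := c
    have hmap : (⟨s, a, b⟩ : Cut ι) ∈ (cuts e w).map (fun c => ⟨c.sign, l :: c.left, c.right⟩) ↔
        ∃ a', a = l :: a' ∧ ⟨s, a', b⟩ ∈ cuts e w := by
      grind
    rw [cuts, List.mem_append, hmap]
    rcases a with _ | ⟨x, _ | ⟨y, a⟩⟩ <;> grind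

end Cuts

/-! ### Integration by parts on the unitary group -/

section WordDerivative

open scoped Matrix.Norms.L2Operator

variable {ι n : Type*} [DecidableEq ι] [Fintype n] [DecidableEq n]

/-- The one-parameter group in the direction `i H` of the unitary group at `e`. -/
def edgeFlow (e : ι) (H : selfAdjoint (Matrix n n ℂ)) (t : ℝ) : ι → unitaryGroup n ℂ :=
  Pi.mulSingle e (selfAdjoint.expUnitary (t • H))

lemma edgeFlow_zero (e : ι) (H : selfAdjoint (Matrix n n ℂ)) : edgeFlow e H 0 = 1 := by
  rw [edgeFlow, zero_smul, selfAdjoint.expUnitary_zero, Pi.mulSingle_one]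

lemma edgeFlow_add (e : ι) (H : selfAdjoint (Matrix n n ℂ)) (s t : ℝ) :
    edgeFlow e H (s + t) = edgeFlow e H s * edgeFlow e H t := by
  rw [edgeFlow, add_smul, Commute.expUnitary_add, Pi.mulSingle_mul, edgeFlow, edgeFlow]
  exact ((Commute.refl (H : Matrix n n ℂ)).smul_left s).smul_right t

lemma hasDerivAt_expUnitary_smul (H : selfAdjoint (Matrix n n ℂ)) :
    HasDerivAt (fun t : ℝ => (selfAdjoint.expUnitary (t • H) : Matrix n n ℂ))
      (Complex.I • (H : Matrix n n ℂ)) 0 := by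
  simpa [smul_comm Complex.I] using
    hasDerivAt_exp_smul_const (Complex.I • (H : Matrix n n ℂ)) (0 : ℝ)

/-- The derivative of `wordMatrix U (FreeGroup.mk w)` when the unitary at `e` moves with velocity
`X` relative to left translation. The formula makes sense, and is linear, for all matrices `X`,
not just for the skew-Hermitian ones that are tangent to the unitary group. -/
def wordMatrixDeriv (e : ι) (w : List (ι × Bool)) (U : ι → unitaryGroup n ℂ) :
    Matrix n n ℂ →ₗ[ℂ] Matrix n n ℂ :=
  ((cuts e w).map fun c => c.sign • LinearMap.mulLeftRight ℂ
    (wordMatrix U (FreeGroup.mk c.left), wordMatrix U (FreeGroup.mk c.right))).sum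

lemma wordMatrixDeriv_apply (e : ι) (w : List (ι × Bool)) (U : ι → unitaryGroup n ℂ)
    (X : Matrix n n ℂ) :
    wordMatrixDeriv e w U X = ((cuts e w).map fun c => c.sign •
      (wordMatrix U (FreeGroup.mk c.left) * X * wordMatrix U (FreeGroup.mk c.right))).sum := by
  rw [wordMatrixDeriv, ← LinearMap.applyₗ_apply_apply (R := ℂ), map_list_sum, List.map_map]
  rfl

lemma wordMatrixDeriv_cons (e : ι) (l : ι × Bool) (w : List (ι × Bool))
    (U : ι → unitaryGroup n ℂ) (X : Matrix n n ℂ) :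
    wordMatrixDeriv e (l :: w) U X =
      wordMatrixDeriv e [l] U X * wordMatrix U (FreeGroup.mk w) +
        wordMatrix U (FreeGroup.mk [l]) * wordMatrixDeriv e w U X := by
  simp only [wordMatrixDeriv_apply, cuts, List.map_nil, List.append_nil, List.map_append,
    List.sum_append, List.map_map, ← List.sum_map_mul_left]
  congr 1
  · split_ifs with hl
    · cases l.2 <;>
        simp [wordMatrix_mk_cons U l w, ← FreeGroup.one_eq_mk, wordMatrix_one, mul_assoc]
    · simp
  · refine congrArg List.sum (List.map_congr_left fun c _ => ?_)
    simp only [Function.comp_apply, wordMatrix_mk_cons U l c.left, mul_smul_comm, mul_assoc]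

lemma continuous_wordMatrixDeriv (e : ι) (w : List (ι × Bool)) (X : Matrix n n ℂ) :
    Continuous fun U : ι → unitaryGroup n ℂ => wordMatrixDeriv e w U X := by
  simp only [wordMatrixDeriv_apply]
  exact continuous_list_sum _ fun c _ =>
    (((continuous_wordMatrix _).mul continuous_const).mul (continuous_wordMatrix _)).const_smul _

lemma hasDerivAt_wordMatrix_singleton (e : ι) (l : ι × Bool) (U : ι → unitaryGroup n ℂ)
    (H : selfAdjoint (Matrix n n ℂ)) :
    HasDerivAt (fun t => wordMatrix (edgeFlow e H t * U) (FreeGroup.mk [l]))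
      (wordMatrixDeriv e [l] U (Complex.I • (H : Matrix n n ℂ))) 0 := by
  obtain ⟨i, b⟩ := l
  by_cases hi : i = e
  · subst hi
    cases b
    · simpa [wordMatrixDeriv_apply, cuts, wordMatrix, edgeFlow, FreeGroup.lift_mk] using
        ((hasDerivAt_expUnitary_smul H).star).const_mul (star (U i : Matrix n n ℂ))
    · simpa [wordMatrixDeriv_apply, cuts, wordMatrix, edgeFlow, FreeGroup.lift_mk] using
        (hasDerivAt_expUnitary_smul H).mul_const (U i : Matrix n n ℂ)
  · have hconst (t : ℝ) : wordMatrix (edgeFlow e H t * U) (FreeGroup.mk [(i, b)]) =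
        wordMatrix U (FreeGroup.mk [(i, b)]) := by
      simp [wordMatrix, edgeFlow, FreeGroup.lift_mk, hi]
    simpa only [hconst, wordMatrixDeriv_apply, cuts, hi, if_false, List.nil_append, List.map_nil,
      List.sum_nil] using hasDerivAt_const (0 : ℝ) _

lemma hasDerivAt_wordMatrix (e : ι) (w : List (ι × Bool)) (U : ι → unitaryGroup n ℂ)
    (H : selfAdjoint (Matrix n n ℂ)) :
    HasDerivAt (fun t => wordMatrix (edgeFlow e H t * U) (FreeGroup.mk w))
      (wordMatrixDeriv e w U (Complex.I • (H : Matrix n n ℂ))) 0 := by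
  induction w with
  | nil =>
    simpa [wordMatrixDeriv_apply, cuts, ← FreeGroup.one_eq_mk, wordMatrix_one] using
      hasDerivAt_const (0 : ℝ) (1 : Matrix n n ℂ)
  | cons l w ih =>
    simpa only [wordMatrix_mk_cons _ l w, wordMatrixDeriv_cons e l w, edgeFlow_zero,
      one_mul] using
      (hasDerivAt_wordMatrix_singleton e l U H).fun_mul ih

end WordDerivative

section IntegrationByParts

/-- The left translates of `f` by `γ t` all have the same integral. -/
lemma integral_eq_zero_of_hasDerivAt_mul_left {G E : Type*} [Group G] [TopologicalSpace G]
    [IsTopologicalGroup G] [CompactSpace G] [MeasurableSpace G] [BorelSpace G]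
    [NormedAddCommGroup E] [NormedSpace ℝ E] {P : Measure G} [IsFiniteMeasure P]
    [P.IsMulLeftInvariant] {f f' : G → E} (hf : Continuous f) (hf' : Continuous f') {γ : ℝ → G}
    (hγ : γ 0 = 1)
    (hderiv : ∀ (U : G) (t : ℝ), HasDerivAt (fun s => f (γ s * U)) (f' (γ t * U)) t) :
    ∫ U, f' U ∂P = 0 := by
  obtain ⟨C, hC⟩ := isCompact_univ.exists_bound_of_continuousOn hf'.continuousOn
  have integrable_translate {h : G → E} (hh : Continuous h) (t : ℝ) :
      Integrable (fun U => h (γ t * U)) P :=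
    integrable_of_continuous (hh.comp (continuous_const_mul _))
  have hinteg : HasDerivAt (fun t => ∫ U, f (γ t * U) ∂P) (∫ U, f' (γ 0 * U) ∂P) 0 :=
    (hasDerivAt_integral_of_dominated_loc_of_deriv_le (bound := fun _ => C) univ_mem
      (.of_forall fun t => (integrable_translate hf t).aestronglyMeasurable)
      (integrable_translate hf 0) (integrable_translate hf' 0).aestronglyMeasurable
      (.of_forall fun U t _ => hC _ (Set.mem_univ _)) (integrable_const C)
      (.of_forall fun U t _ => hderiv U t)).2
  simp only [integral_mul_left_eq_self f] at hinteg
  simpa only [hγ, one_mul] using hinteg.unique (hasDerivAt_const (0 : ℝ) _)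

variable {ι n : Type*} [DecidableEq ι] [Fintype n] [DecidableEq n]

/-- `f` is a continuous function of a family of unitaries, and `f'` is the complex-linear
extension of its derivative under left translation of the unitary at `e`. -/
structure HasEdgeDeriv (e : ι) (f : (ι → unitaryGroup n ℂ) → ℂ)
    (f' : (ι → unitaryGroup n ℂ) → Matrix n n ℂ →ₗ[ℂ] ℂ) : Prop where
  continuous : Continuous f
  continuous_deriv : ∀ X, Continuous fun U => f' U X
  hasDerivAt : ∀ U (H : selfAdjoint (Matrix n n ℂ)),
    HasDerivAt (fun t => f (edgeFlow e H t * U)) (f' U (Complex.I • (H : Matrix n n ℂ))) 0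

namespace HasEdgeDeriv

variable {e : ι} {f g : (ι → unitaryGroup n ℂ) → ℂ}
  {f' g' : (ι → unitaryGroup n ℂ) → Matrix n n ℂ →ₗ[ℂ] ℂ}

protected lemma mul (hf : HasEdgeDeriv e f f') (hg : HasEdgeDeriv e g g') :
    HasEdgeDeriv e (fun U => f U * g U) (fun U => g U • f' U + f U • g' U) where
  continuous := hf.continuous.mul hg.continuous
  continuous_deriv X :=
    (hg.continuous.mul (hf.continuous_deriv X)).add (hf.continuous.mul (hg.continuous_deriv X))
  hasDerivAt U H := by
    simpa only [edgeFlow_zero, one_mul, LinearMap.add_apply, LinearMap.smul_apply, smul_eq_mul,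
      mul_comm] using (hf.hasDerivAt U H).fun_mul (hg.hasDerivAt U H)

protected lemma const_mul (z : ℂ) (hf : HasEdgeDeriv e f f') :
    HasEdgeDeriv e (fun U => z * f U) (fun U => z • f' U) where
  continuous := continuous_const.mul hf.continuous
  continuous_deriv X := continuous_const.mul (hf.continuous_deriv X)
  hasDerivAt U H := (hf.hasDerivAt U H).const_mul z

protected lemma sum {κ : Type*} {s : Finset κ} {F : κ → (ι → unitaryGroup n ℂ) → ℂ}
    {F' : κ → (ι → unitaryGroup n ℂ) → Matrix n n ℂ →ₗ[ℂ] ℂ}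
    (h : ∀ k ∈ s, HasEdgeDeriv e (F k) (F' k)) :
    HasEdgeDeriv e (fun U => ∑ k ∈ s, F k U) (fun U => ∑ k ∈ s, F' k U) where
  continuous := continuous_finsetSum s fun k hk => (h k hk).continuous
  continuous_deriv X := by
    simpa only [LinearMap.sum_apply] using
      continuous_finsetSum s fun k hk => (h k hk).continuous_deriv X
  hasDerivAt U H := by
    simpa only [LinearMap.sum_apply] using HasDerivAt.fun_sum fun k hk => (h k hk).hasDerivAt U H

protected lemma cexp (hf : HasEdgeDeriv e f f') :
    HasEdgeDeriv e (fun U => Complex.exp (f U)) (fun U => Complex.exp (f U) • f' U) where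
  continuous := Complex.continuous_exp.comp hf.continuous
  continuous_deriv X := (Complex.continuous_exp.comp hf.continuous).mul (hf.continuous_deriv X)
  hasDerivAt U H := by
    simpa only [edgeFlow_zero, one_mul, LinearMap.smul_apply, smul_eq_mul] using
      (hf.hasDerivAt U H).cexp

open scoped Matrix.Norms.L2Operator in
protected lemma linearMap_wordMatrix (φ : Matrix n n ℂ →ₗ[ℂ] ℂ) (e : ι) (w : List (ι × Bool)) :
    HasEdgeDeriv e (fun U => φ (wordMatrix U (FreeGroup.mk w)))
      (fun U => φ ∘ₗ wordMatrixDeriv e w U) where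
  continuous := φ.continuous_of_finiteDimensional.comp (continuous_wordMatrix _)
  continuous_deriv X := φ.continuous_of_finiteDimensional.comp (continuous_wordMatrixDeriv e w X)
  hasDerivAt U H := (φ.toContinuousLinearMap.restrictScalars ℝ).hasFDerivAt.comp_hasDerivAt 0
    (hasDerivAt_wordMatrix e w U H)

lemma hasDerivAt_of_time (hf : HasEdgeDeriv e f f') (U : ι → unitaryGroup n ℂ)
    (H : selfAdjoint (Matrix n n ℂ)) (t : ℝ) :
    HasDerivAt (fun s => f (edgeFlow e H s * U))
      (f' (edgeFlow e H t * U) (Complex.I • (H : Matrix n n ℂ))) t := by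
  have h := (hf.hasDerivAt (edgeFlow e H t * U) H).scomp_of_eq t
    ((hasDerivAt_id t).sub_const t) (by simp)
  simpa [Function.comp_def, ← mul_assoc, ← edgeFlow_add] using h

variable [Countable ι] [MeasurableSpace (unitaryGroup n ℂ)] [BorelSpace (unitaryGroup n ℂ)]
  (P : Measure (ι → unitaryGroup n ℂ)) [IsFiniteMeasure P] [P.IsMulLeftInvariant]

lemma integral_deriv_eq_zero (hf : HasEdgeDeriv e f f') (X : Matrix n n ℂ) :
    ∫ U, f' U X ∂P = 0 := by
  have hinteg (Y : Matrix n n ℂ) : Integrable (fun U => f' U Y) P :=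
    integrable_of_continuous (hf.continuous_deriv Y)
  have skew (H : selfAdjoint (Matrix n n ℂ)) :
      ∫ U, f' U (Complex.I • (H : Matrix n n ℂ)) ∂P = 0 :=
    integral_eq_zero_of_hasDerivAt_mul_left hf.continuous (hf.continuous_deriv _)
      (edgeFlow_zero e H) fun U t => hf.hasDerivAt_of_time U H t
  have selfAdj (H : selfAdjoint (Matrix n n ℂ)) : ∫ U, f' U (H : Matrix n n ℂ) ∂P = 0 := by
    simpa [integral_const_mul] using skew H
  rw [← realPart_add_I_smul_imaginaryPart X]
  simp only [map_add]
  rw [integral_add (hinteg _) (hinteg _), selfAdj, skew, add_zero]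

end HasEdgeDeriv

/-! ### Schwinger–Dyson equations -/

/-- The signed sum of the products of traces obtained by splitting `w` at the letter `e`. -/
def splitSum (e : ι) (w : List (ι × Bool)) (U : ι → unitaryGroup n ℂ) : ℂ :=
  ((cuts e w).map fun c => c.sign •
    (wordTrace U (FreeGroup.mk c.left) * wordTrace U (FreeGroup.mk c.right))).sum

/-- The signed sum of the traces obtained by inserting `w` into `v` at the letter `e`. -/
def mergeSum (e : ι) (w v : List (ι × Bool)) (U : ι → unitaryGroup n ℂ) : ℂ :=
  ((cuts e v).map fun c => c.sign •
    wordTrace U (FreeGroup.mk w * (FreeGroup.mk c.right * FreeGroup.mk c.left))).sum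

@[fun_prop]
lemma continuous_mergeSum (e : ι) (w v : List (ι × Bool)) :
    Continuous fun U : ι → unitaryGroup n ℂ => mergeSum e w v U :=
  continuous_list_sum _ fun _ _ => (continuous_wordTrace _).const_smul _

lemma sum_mul_single_mul_apply {R : Type*} [CommSemiring R] (A B : Matrix n n R) :
    ∑ i, ∑ j, (A * single i j 1 * B : Matrix n n R) i j = A.trace * B.trace := by
  simp only [trace, diag_apply, sum_mul_sum]
  refine sum_congr rfl fun i _ => sum_congr rfl fun j _ => ?_
  rw [Matrix.mul_assoc, mul_apply, sum_eq_single i, single_mul_apply_same, one_mul]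
  · intro k _ hk
    rw [single_mul_apply_of_ne _ _ _ _ _ hk, mul_zero]
  · simp

lemma sum_apply_mul_trace_mul_single_mul {R : Type*} [CommSemiring R] (M A B : Matrix n n R) :
    ∑ i, ∑ j, M i j * (A * single i j 1 * B).trace = (M * (B * A)).trace := by
  have h (i j : n) : (A * single i j 1 * B).trace = (B * A) j i := by
    rw [trace_mul_comm, ← Matrix.mul_assoc, trace_mul_single, MulOpposite.op_one,
      one_smul]
  simp only [h]
  exact sum_congr rfl fun i _ => (Matrix.mul_apply (M := M)).symm

lemma sum_wordMatrixDeriv_single_apply (e : ι) (w : List (ι × Bool)) (U : ι → unitaryGroup n ℂ) :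
    ∑ i, ∑ j, wordMatrixDeriv e w U (single i j 1) i j = splitSum e w U := by
  simp only [wordMatrixDeriv_apply, splitSum, wordTrace]
  induction cuts e w with
  | nil => simp
  | cons c l ih =>
    simp only [List.map_cons, List.sum_cons, Matrix.add_apply, sum_add_distrib, ih,
      Matrix.smul_apply, ← smul_sum, sum_mul_single_mul_apply]

lemma sum_wordMatrix_mul_trace_wordMatrixDeriv (e : ι) (w v : List (ι × Bool))
    (U : ι → unitaryGroup n ℂ) :
    ∑ i, ∑ j, wordMatrix U (FreeGroup.mk w) i j * (wordMatrixDeriv e v U (single i j 1)).trace =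
      mergeSum e w v U := by
  simp only [wordMatrixDeriv_apply, mergeSum, wordTrace, wordMatrix_mul]
  induction cuts e v with
  | nil => simp
  | cons c l ih =>
    simp only [List.map_cons, List.sum_cons, trace_add, mul_add, sum_add_distrib, ih, trace_smul,
      mul_smul_comm, ← smul_sum, sum_apply_mul_trace_mul_single_mul]

variable [Countable ι] [MeasurableSpace (unitaryGroup n ℂ)] [BorelSpace (unitaryGroup n ℂ)]
  (P : Measure (ι → unitaryGroup n ℂ)) [IsFiniteMeasure P] [P.IsMulLeftInvariant]

lemma integral_mul_splitSum_add {e : ι} {f : (ι → unitaryGroup n ℂ) → ℂ}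
    {f' : (ι → unitaryGroup n ℂ) → Matrix n n ℂ →ₗ[ℂ] ℂ} (hf : HasEdgeDeriv e f f')
    (w : List (ι × Bool)) :
    ∫ U, (f U * splitSum e w U +
      ∑ i, ∑ j, wordMatrix U (FreeGroup.mk w) i j * f' U (single i j 1)) ∂P = 0 := by
  have hderiv (i j : n) := (HasEdgeDeriv.linearMap_wordMatrix (entryLinearMap ℂ ℂ i j) e w).mul hf
  have expand (U : ι → unitaryGroup n ℂ) : f U * splitSum e w U +
      ∑ i, ∑ j, wordMatrix U (FreeGroup.mk w) i j * f' U (single i j 1) =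
        ∑ i, ∑ j, (f U * wordMatrixDeriv e w U (single i j 1) i j +
          wordMatrix U (FreeGroup.mk w) i j * f' U (single i j 1)) := by
    simp only [sum_add_distrib, ← mul_sum, sum_wordMatrixDeriv_single_apply]
  have hinteg (i j : n) : Integrable (fun U => f U * wordMatrixDeriv e w U (single i j 1) i j +
      wordMatrix U (FreeGroup.mk w) i j * f' U (single i j 1)) P :=
    integrable_of_continuous ((hderiv i j).continuous_deriv (single i j 1))
  simp only [expand]
  rw [integral_finsetSum _ fun i _ => integrable_finsetSum _ fun j _ => hinteg i j]
  refine sum_eq_zero fun i _ => ?_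
  rw [integral_finsetSum _ fun j _ => hinteg i j]
  exact sum_eq_zero fun j _ => (hderiv i j).integral_deriv_eq_zero P (single i j 1)

/-- **Schwinger–Dyson equation** with a trace as test function. -/
lemma integral_wordTrace_mul_splitSum_add (e : ι) (w v : List (ι × Bool)) :
    ∫ U, (wordTrace U (FreeGroup.mk v) * splitSum e w U + mergeSum e w v U) ∂P = 0 := by
  simpa only [LinearMap.comp_apply, traceLinearMap_apply,
    sum_wordMatrix_mul_trace_wordMatrixDeriv, wordTrace] using
    integral_mul_splitSum_add P (.linearMap_wordMatrix (traceLinearMap n ℂ ℂ) e v) w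

/-- **Schwinger–Dyson equation** with the exponential of a sum of traces as test function. -/
lemma integral_cexp_mul_splitSum_add {κ : Type*} (s : Finset κ) (z : ℂ)
    (v : κ → List (ι × Bool)) (e : ι) (w : List (ι × Bool)) :
    ∫ U, Complex.exp (z * ∑ k ∈ s, wordTrace U (FreeGroup.mk (v k))) *
      (splitSum e w U + z * ∑ k ∈ s, mergeSum e w (v k) U) ∂P = 0 := by
  have h := integral_mul_splitSum_add P ((HasEdgeDeriv.sum (s := s) fun k _ =>
    .linearMap_wordMatrix (traceLinearMap n ℂ ℂ) e (v k)).const_mul z).cexp w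
  rw [← h]
  refine integral_congr_ae (.of_forall fun U => ?_)
  simp only [← sum_wordMatrix_mul_trace_wordMatrixDeriv, mul_add, LinearMap.smul_apply,
    LinearMap.sum_apply, LinearMap.comp_apply, traceLinearMap_apply, smul_eq_mul, wordTrace]
  congr 1
  simp only [mul_sum]
  rw [sum_comm]
  refine sum_congr rfl fun i _ => ?_
  rw [sum_comm]
  exact sum_congr rfl fun j _ => sum_congr rfl fun k _ => by ring

end IntegrationByParts

/-! ### Cyclically reduced words -/

section CyclicallyReduced

open FreeGroup (IsCyclicallyReduced)

variable {ι : Type*} {u v w : List (ι × Bool)}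

lemma mk_injOn_isReduced :
    Set.InjOn (FreeGroup.mk : List (ι × Bool) → FreeGroup ι) {w | FreeGroup.IsReduced w} := by
  classical
  intro u hu v hv h
  rw [← hu.reduce_eq, ← hv.reduce_eq, ← FreeGroup.toWord_mk, h, FreeGroup.toWord_mk]

lemma mk_ne_one_of_isReduced (hw : FreeGroup.IsReduced w) (h : w ≠ []) : FreeGroup.mk w ≠ 1 :=
  mk_injOn_isReduced.ne hw (show FreeGroup.IsReduced [] from .nil) h

lemma isCyclicallyReduced_append_comm :
    IsCyclicallyReduced (u ++ v) ↔ IsCyclicallyReduced (v ++ u) := by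
  rcases eq_or_ne u [] with rfl | hu
  · simp
  rcases eq_or_ne v [] with rfl | hv
  · simp
  rw [FreeGroup.isCyclicallyReduced_iff, FreeGroup.isCyclicallyReduced_iff, FreeGroup.IsReduced,
    FreeGroup.IsReduced, List.isChain_append, List.isChain_append,
    List.getLast?_append_of_ne_nil u hv, List.getLast?_append_of_ne_nil v hu,
    List.head?_append_of_ne_nil u hu, List.head?_append_of_ne_nil v hv]
  tauto

lemma isCyclicallyReduced_invRev (hw : IsCyclicallyReduced w) :
    IsCyclicallyReduced (FreeGroup.invRev w) := by
  classical
  refine ⟨.of_reduce_eq ?_, ?_⟩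
  · rw [FreeGroup.reduce_invRev, hw.isReduced.reduce_eq]
  · have h := hw.2
    simp only [FreeGroup.invRev, List.getLast?_reverse, List.head?_reverse, List.head?_map,
      List.getLast?_map, Option.mem_map]
    rintro _ ⟨a, ha, rfl⟩ _ ⟨b, hb, rfl⟩ hab
    exact congrArg (!·) (h b hb a ha hab.symm).symm

lemma mk_mul_mk_mul_mk_eq_one_iff {a b : List (ι × Bool)} (hu : IsCyclicallyReduced u)
    (hab : IsCyclicallyReduced (a ++ b)) :
    FreeGroup.mk u * (FreeGroup.mk b * FreeGroup.mk a) = 1 ↔ b ++ a = FreeGroup.invRev u := by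
  rw [mul_eq_one_iff_inv_eq, FreeGroup.inv_mk, FreeGroup.mul_mk, eq_comm]
  exact mk_injOn_isReduced.eq_iff (isCyclicallyReduced_append_comm.1 hab).isReduced
    (isCyclicallyReduced_invRev hu).isReduced

lemma exists_isConj_mk_isCyclicallyReduced [DecidableEq ι] (g : FreeGroup ι) :
    ∃ w, IsCyclicallyReduced w ∧ w.length ≤ g.norm ∧ IsConj (FreeGroup.mk w) g := by
  have h := FreeGroup.reduceCyclically.conj_conjugator_reduceCyclically g.toWord
  refine ⟨FreeGroup.reduceCyclically g.toWord,
    FreeGroup.reduceCyclically.isCyclicallyReduced FreeGroup.isReduced_toWord, ?_,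
    isConj_iff.2 ⟨FreeGroup.mk (FreeGroup.reduceCyclically.conjugator g.toWord), ?_⟩⟩
  · rw [FreeGroup.norm]
    nth_rw 2 [← h]
    rw [List.length_append, List.length_append]
    omega
  · rw [FreeGroup.inv_mk, FreeGroup.mul_mk, FreeGroup.mul_mk, h, FreeGroup.mk_toWord]

lemma exists_isConj_mk_cons_or_inv [DecidableEq ι] {g : FreeGroup ι} (hg : g ≠ 1) :
    ∃ e w, IsCyclicallyReduced ((e, true) :: w) ∧ w.length < g.norm ∧
      (IsConj (FreeGroup.mk ((e, true) :: w)) g ∨ IsConj (FreeGroup.mk ((e, true) :: w)) g⁻¹) := by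
  obtain ⟨w, hw, hlen, hconj⟩ := exists_isConj_mk_isCyclicallyReduced g
  rcases w with _ | ⟨⟨e, b⟩, w⟩
  · exact absurd (isConj_one_right.1 hconj) hg
  cases b with
  | true => exact ⟨e, w, hw, hlen, .inl hconj⟩
  | false =>
    have hinv : FreeGroup.invRev ((e, false) :: w) = FreeGroup.invRev w ++ [(e, true)] :=
      FreeGroup.invRev_cons
    refine ⟨e, FreeGroup.invRev w, ?_, by simpa using hlen, .inr ?_⟩
    · have := isCyclicallyReduced_invRev hw
      rwa [hinv, isCyclicallyReduced_append_comm] at this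
    · obtain ⟨c, rfl⟩ := isConj_iff.1 hconj
      refine isConj_iff.2 ⟨c * (FreeGroup.mk [(e, true)])⁻¹, ?_⟩
      rw [conj_inv, FreeGroup.inv_mk (L := (e, false) :: w), hinv, ← FreeGroup.mul_mk,
        ← List.singleton_append (l := FreeGroup.invRev w), ← FreeGroup.mul_mk]
      group

end CyclicallyReduced

/-! ### Uniform bounds for traces of nontrivial words -/

section TraceBounds

open FreeGroup (IsCyclicallyReduced)

variable {ι n : Type*} [DecidableEq ι] [Fintype n] [DecidableEq n] {e : ι} {w : List (ι × Bool)}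

lemma norm_list_sum_map_le {α E : Type*} [SeminormedAddCommGroup E] (l : List α) (f : α → E) :
    ‖(l.map f).sum‖ ≤ (l.map fun a => ‖f a‖).sum := by
  simpa only [List.map_map, Function.comp_def] using
    List.le_sum_of_subadditive norm norm_zero.le norm_add_le (l.map f)

lemma norm_mergeSum_le (e : ι) (w v : List (ι × Bool)) (U : ι → unitaryGroup n ℂ) :
    ‖mergeSum e w v U‖ ≤ (cuts e v).length * Fintype.card n := by
  refine (norm_list_sum_map_le _ _).trans ?_
  rw [← nsmul_eq_mul, ← List.length_map (as := cuts e v)]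
  refine List.sum_le_card_nsmul _ _ fun x hx => ?_
  obtain ⟨c, -, rfl⟩ := List.mem_map.1 hx
  rw [norm_units_zsmul]
  exact norm_wordTrace_le _ _

/-- The contribution to `splitSum e ((e, true) :: w)` of the cuts other than the trivial one
before the first letter. -/
def properSplitSum (e : ι) (w : List (ι × Bool)) (U : ι → unitaryGroup n ℂ) : ℂ :=
  ((cuts e w).map fun c => c.sign •
    (wordTrace U (FreeGroup.mk ((e, true) :: c.left)) * wordTrace U (FreeGroup.mk c.right))).sum

lemma splitSum_cons_true (e : ι) (w : List (ι × Bool)) (U : ι → unitaryGroup n ℂ) :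
    splitSum e ((e, true) :: w) U =
      Fintype.card n * wordTrace U (FreeGroup.mk ((e, true) :: w)) + properSplitSum e w U := by
  simp [splitSum, properSplitSum, cuts, ← FreeGroup.one_eq_mk, wordTrace_one, Function.comp_def]

@[fun_prop]
lemma continuous_properSplitSum (e : ι) (w : List (ι × Bool)) :
    Continuous fun U : ι → unitaryGroup n ℂ => properSplitSum e w U :=
  continuous_list_sum _ fun _ _ =>
    ((continuous_wordTrace _).mul (continuous_wordTrace _)).const_smul _

lemma norm_properSplitSum_le (e : ι) (w : List (ι × Bool)) (U : ι → unitaryGroup n ℂ) :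
    ‖properSplitSum e w U‖ ≤
      Fintype.card n * ((cuts e w).map fun c => ‖wordTrace U (FreeGroup.mk c.right)‖).sum := by
  refine (norm_list_sum_map_le _ _).trans ?_
  rw [← List.sum_map_mul_left]
  refine List.sum_le_sum fun c _ => ?_
  rw [norm_units_zsmul, norm_mul]
  exact mul_le_mul_of_nonneg_right (norm_wordTrace_le _ _) (norm_nonneg _)

lemma mk_cons_left_ne_one {c : Cut ι} (hw : IsCyclicallyReduced ((e, true) :: w))
    (hc : c ∈ cuts e w) : FreeGroup.mk ((e, true) :: c.left) ≠ 1 := by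
  obtain ⟨rfl, -⟩ := mem_cuts.1 hc
  exact mk_ne_one_of_isReduced
    (hw.isReduced.infix (List.prefix_append ((e, true) :: c.left) c.right).isInfix)
    (List.cons_ne_nil _ _)

lemma mk_right_ne_one {c : Cut ι} (hw : IsCyclicallyReduced ((e, true) :: w))
    (hc : c ∈ cuts e w) : FreeGroup.mk c.right ≠ 1 := by
  obtain ⟨rfl, hcut⟩ := mem_cuts.1 hc
  refine mk_ne_one_of_isReduced
    (hw.isReduced.infix (List.suffix_append ((e, true) :: c.left) c.right).isInfix) fun hnil => ?_
  obtain ⟨s, left, right⟩ := c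
  subst hnil
  obtain ⟨-, h⟩ | ⟨-, h⟩ := hcut
  · simp at h
  · have hlast : (e, false) ∈ ((e, true) :: (left ++ [])).getLast? := by
      rw [List.append_nil, List.getLast?_cons, h]
      rfl
    exact absurd (hw.2 _ hlast (e, true) rfl rfl) (by simp)

lemma card_mul_integral_norm_wordTrace_sq [Countable ι] [MeasurableSpace (unitaryGroup n ℂ)]
    [BorelSpace (unitaryGroup n ℂ)] (P : Measure (ι → unitaryGroup n ℂ)) [IsFiniteMeasure P]
    [P.IsMulLeftInvariant] (e : ι) (w : List (ι × Bool)) :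
    ((Fintype.card n * ∫ U, ‖wordTrace U (FreeGroup.mk ((e, true) :: w))‖ ^ 2 ∂P : ℝ) : ℂ) =
      -∫ U, (starRingEnd ℂ (wordTrace U (FreeGroup.mk ((e, true) :: w))) * properSplitSum e w U +
        mergeSum e ((e, true) :: w) (FreeGroup.invRev ((e, true) :: w)) U) ∂P := by
  set u := (e, true) :: w with hu
  have expand (U : ι → unitaryGroup n ℂ) :
      wordTrace U (FreeGroup.mk (FreeGroup.invRev u)) * splitSum e u U +
        mergeSum e u (FreeGroup.invRev u) U =
      ((Fintype.card n * ‖wordTrace U (FreeGroup.mk u)‖ ^ 2 : ℝ) : ℂ) +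
        (starRingEnd ℂ (wordTrace U (FreeGroup.mk u)) * properSplitSum e w U +
          mergeSum e u (FreeGroup.invRev u) U) := by
    rw [← FreeGroup.inv_mk, wordTrace_inv, hu, splitSum_cons_true]
    push_cast
    rw [← Complex.conj_mul']
    ring
  have schwinger_dyson := integral_wordTrace_mul_splitSum_add P e u (FreeGroup.invRev u)
  simp only [expand] at schwinger_dyson
  rw [integral_add (integrable_of_continuous (by fun_prop)) (integrable_of_continuous
    (by fun_prop)), integral_complex_ofReal, integral_const_mul] at schwinger_dyson
  exact eq_neg_of_add_eq_zero_left schwinger_dyson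

lemma integral_norm_wordTrace_sq_le [Countable ι] [MeasurableSpace (unitaryGroup n ℂ)]
    [BorelSpace (unitaryGroup n ℂ)] (P : Measure (ι → unitaryGroup n ℂ)) [IsProbabilityMeasure P]
    [P.IsMulLeftInvariant] (e : ι) (w : List (ι × Bool)) :
    ∫ U, ‖wordTrace U (FreeGroup.mk ((e, true) :: w))‖ ^ 2 ∂P ≤
      ∫ U, ‖wordTrace U (FreeGroup.mk ((e, true) :: w))‖ *
        ‖((cuts e w).map fun c => ‖wordTrace U (FreeGroup.mk c.right)‖).sum‖ ∂P +
      (cuts e (FreeGroup.invRev ((e, true) :: w))).length := by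
  rcases isEmpty_or_nonempty n with hn | hn
  · simp [wordTrace, trace_eq_zero_of_isEmpty]
  have : Continuous fun U : ι → unitaryGroup n ℂ =>
      ((cuts e w).map fun c => ‖wordTrace U (FreeGroup.mk c.right)‖).sum :=
    continuous_list_sum _ fun _ _ => (continuous_wordTrace _).norm
  refine le_of_mul_le_mul_left ?_ (Nat.cast_pos.2 (Fintype.card_pos (α := n)) : (0 : ℝ) < _)
  refine (Real.le_norm_self _).trans ?_
  rw [← Complex.norm_real, card_mul_integral_norm_wordTrace_sq, norm_neg, mul_add,
    ← integral_const_mul]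
  refine (norm_integral_le_of_norm_le (g := fun U => Fintype.card n *
      (‖wordTrace U (FreeGroup.mk ((e, true) :: w))‖ *
        ‖((cuts e w).map fun c => ‖wordTrace U (FreeGroup.mk c.right)‖).sum‖) +
      (cuts e (FreeGroup.invRev ((e, true) :: w))).length * Fintype.card n)
    (integrable_of_continuous (by fun_prop)) (.of_forall fun U => (norm_add_le _ _).trans
      (add_le_add ?_ (norm_mergeSum_le e _ _ U)))).trans_eq ?_
  · rw [norm_mul, RCLike.norm_conj, mul_left_comm]
    exact mul_le_mul_of_nonneg_left ((norm_properSplitSum_le e w U).trans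
      (mul_le_mul_of_nonneg_left (Real.le_norm_self _) (Nat.cast_nonneg _))) (norm_nonneg _)
  · rw [integral_add (integrable_of_continuous (by fun_prop)) (integrable_const _),
      integral_const, probReal_univ, one_smul, mul_comm ((cuts e _).length : ℝ)]

variable [Countable ι] [∀ N : ℕ, MeasurableSpace (unitaryGroup (Fin N) ℂ)]
  [∀ N : ℕ, BorelSpace (unitaryGroup (Fin N) ℂ)]
  {P : ∀ N : ℕ, Measure (ι → unitaryGroup (Fin N) ℂ)} [∀ N, IsProbabilityMeasure (P N)]
  [∀ N, (P N).IsMulLeftInvariant]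

omit [DecidableEq ι] in
theorem uniformlyBoundedLp_wordTrace {g : FreeGroup ι} (hg : g ≠ 1) :
    UniformlyBoundedLp (fun N (U : ι → unitaryGroup (Fin N) ℂ) => wordTrace U g) 2 P := by
  classical
  induction hk : g.norm using Nat.strong_induction_on generalizing g with
  | _ k ih =>
  obtain ⟨e, w, hw, hlen, hconj⟩ := exists_isConj_mk_cons_or_inv hg
  have right_bound (c : Cut ι) (hc : c ∈ cuts e w) :
      UniformlyBoundedLp (fun N (U : ι → unitaryGroup (Fin N) ℂ) =>
        ‖wordTrace U (FreeGroup.mk c.right)‖) 2 P := by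
    have hnorm : (FreeGroup.mk c.right).norm < k := by
      have hc := congrArg List.length (mem_cuts.1 hc).1
      have := FreeGroup.norm_mk_le (L₁ := c.right)
      grind
    exact (ih _ hnorm (mk_right_ne_one hw hc) rfl).of_norm_le (C := 1)
      (fun N => (continuous_wordTrace _).norm.aestronglyMeasurable) (by simp)
  have loop_bound := (UniformlyBoundedLp.list_sum one_le_two right_bound).of_integral_norm_sq_le
    (fun N => (continuous_wordTrace _).memLp_of_hasCompactSupport (.of_compactSpace _))
    fun N => integral_norm_wordTrace_sq_le (P N) e w
  exact loop_bound.of_norm_le (C := 1) (fun N => (continuous_wordTrace g).aestronglyMeasurable)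
    fun N U => by rw [one_mul, norm_wordTrace_eq_of_isConj _ _ _ hconj]

lemma uniformlyBoundedLp_properSplitSum (hw : IsCyclicallyReduced ((e, true) :: w)) :
    UniformlyBoundedLp (fun N (U : ι → unitaryGroup (Fin N) ℂ) => properSplitSum e w U) 1 P := by
  refine .list_sum le_rfl fun c hc => ?_
  refine ((uniformlyBoundedLp_wordTrace (mk_cons_left_ne_one hw hc)).mul
    (uniformlyBoundedLp_wordTrace (mk_right_ne_one hw hc))).of_norm_le (C := 1) (fun N => ?_) ?_
  · exact (((continuous_wordTrace _).mul (continuous_wordTrace _)).const_smul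
      c.sign).aestronglyMeasurable
  · intro N U
    rw [norm_units_zsmul, one_mul]

end TraceBounds

/-! ### Merging a loop with its inverse -/

section Merging

open FreeGroup (IsCyclicallyReduced)

variable {ι : Type*} [DecidableEq ι] {e : ι} {v w : List (ι × Bool)}

lemma exists_append_eq_of_isRotated {α : Type*} {l l' : List α} (h : l ~r l') (hl : l ≠ []) :
    ∃ a b, a ≠ [] ∧ a ++ b = l ∧ b ++ a = l' := by
  obtain ⟨k, rfl⟩ := h
  by_cases hk : k % l.length = 0
  · exact ⟨l, [], hl, by simp, by simp [List.rotate_eq_drop_append_take_mod, hk]⟩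
  · exact ⟨l.take (k % l.length), l.drop (k % l.length), by simp [hk, hl],
      List.take_append_drop _ _, List.rotate_eq_drop_append_take_mod.symm⟩

lemma nodup_cuts (e : ι) (w : List (ι × Bool)) : (cuts e w).Nodup := by
  induction w with
  | nil => exact .nil
  | cons l w ih =>
    have hinj : Function.Injective fun c : Cut ι => (⟨c.sign, l :: c.left, c.right⟩ : Cut ι) := by
      rintro ⟨s, a, b⟩ ⟨s', a', b'⟩ h
      simpa using h
    refine List.Nodup.append ?_ (ih.map hinj) ?_
    · split_ifs <;> simp
    · have hne : (-1 : ℤˣ) ≠ 1 := by decide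
      simp only [List.disjoint_left, List.mem_map, mem_cuts]
      grind

/-- The signed number of terms of `mergeSum e w v` which are traces of the trivial word. -/
def mergeCoeff (e : ι) (w v : List (ι × Bool)) : ℤ :=
  ((cuts e v).map fun c =>
    if FreeGroup.mk w * (FreeGroup.mk c.right * FreeGroup.mk c.left) = 1
    then (c.sign : ℤ) else 0).sum

lemma sign_eq_neg_one_of_append_eq_invRev {c : Cut ι} (hw : IsCyclicallyReduced ((e, true) :: w))
    (hc : c ∈ cuts e v) (h : c.right ++ c.left = FreeGroup.invRev ((e, true) :: w)) :
    c.sign = -1 ∧ c.left.getLast? = some (e, false) := by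
  refine (mem_cuts.1 hc).2.resolve_left fun ⟨_, hhead⟩ => ?_
  have hinv := (isCyclicallyReduced_invRev hw).2 (e, false)
    (by simp [FreeGroup.invRev])
    (e, true) (by rw [← h, List.head?_append, hhead]; rfl) rfl
  simp at hinv

lemma mergeCoeff_of_isRotated (hw : IsCyclicallyReduced ((e, true) :: w))
    (hv : IsCyclicallyReduced v) (hnodup : v.Nodup)
    (hrot : v ~r FreeGroup.invRev ((e, true) :: w)) :
    mergeCoeff e ((e, true) :: w) v = -1 := by
  classical
  obtain ⟨a, b, ha, rfl, hba⟩ := exists_append_eq_of_isRotated hrot (by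
    rintro rfl
    simpa [FreeGroup.invRev] using hrot.perm.length_eq)
  obtain ⟨a, x, rfl⟩ := a.eq_nil_or_concat'.resolve_left ha
  obtain ⟨hba', rfl⟩ : b ++ a = FreeGroup.invRev w ∧ x = (e, false) := by
    rw [FreeGroup.invRev_cons, ← List.append_assoc] at hba
    simpa [FreeGroup.invRev] using List.append_inj' hba rfl
  have hmem : (⟨-1, a ++ [(e, false)], b⟩ : Cut ι) ∈ cuts e (a ++ [(e, false)] ++ b) :=
    mem_cuts.2 ⟨rfl, .inr ⟨rfl, by simp⟩⟩
  rw [mergeCoeff, List.sum_map_eq_nsmul_single ⟨-1, a ++ [(e, false)], b⟩,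
    List.count_eq_one_of_mem (nodup_cuts _ _) hmem,
    if_pos ((mk_mul_mk_mul_mk_eq_one_iff hw hv).2 hba)]
  · simp
  · rintro ⟨s, a', b'⟩ hne hc
    refine if_neg fun h => hne ?_
    have hab := (mem_cuts.1 hc).1
    dsimp only at hab h
    rw [mk_mul_mk_mul_mk_eq_one_iff hw (hab ▸ hv)] at h
    obtain ⟨hs, hlast⟩ := sign_eq_neg_one_of_append_eq_invRev hw hc h
    obtain ⟨a', rfl⟩ := List.getLast?_eq_some_iff.1 hlast
    simp only [List.append_assoc, List.singleton_append] at hab hnodup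
    have hmem' : (e, false) ∉ a' ++ b' := (List.nodup_middle.1 (hab ▸ hnodup)).notMem
    rw [List.mem_append, not_or] at hmem'
    obtain ⟨rfl, -, rfl⟩ := (List.append_cons_inj_of_notMem hmem'.1 hmem'.2).1 hab
    exact congrArg (Cut.mk · _ _) hs

lemma mergeCoeff_of_not_isRotated (hw : IsCyclicallyReduced w) (hv : IsCyclicallyReduced v)
    (hrot : ¬ v ~r FreeGroup.invRev w) : mergeCoeff e w v = 0 := by
  refine List.sum_eq_zero fun x hx => ?_
  obtain ⟨c, hc, rfl⟩ := List.mem_map.1 hx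
  refine if_neg fun h => hrot ?_
  obtain ⟨rfl, -⟩ := mem_cuts.1 hc
  rw [mk_mul_mk_mul_mk_eq_one_iff hw hv] at h
  exact h ▸ List.isRotated_append

end Merging

/-! ### The approximate Stein equation for a family of loops -/

section LoopFamilies

open FreeGroup (IsCyclicallyReduced)

variable {ι κ n : Type*} {S : Finset κ} {e : κ → ι} {w : κ → List (ι × Bool)}

/-- The family of loops `(e k, true) :: w k`, for `k ∈ S`, consists of cyclically reduced words
without repeated letters, and each loop has, up to rotation, exactly one inverse in the family. -/
structure IsReversibleLoopFamily (S : Finset κ) (e : κ → ι) (w : κ → List (ι × Bool)) : Prop where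
  isCyclicallyReduced : ∀ k ∈ S, IsCyclicallyReduced ((e k, true) :: w k)
  nodup : ∀ k ∈ S, ((e k, true) :: w k).Nodup
  existsUnique_inverse : ∀ k ∈ S, ∃! k', k' ∈ S ∧
    (e k', true) :: w k' ~r FreeGroup.invRev ((e k, true) :: w k)

lemma IsReversibleLoopFamily.sum_mergeCoeff [DecidableEq ι] (h : IsReversibleLoopFamily S e w)
    {k : κ} (hk : k ∈ S) :
    ∑ k' ∈ S, mergeCoeff (e k) ((e k, true) :: w k) ((e k', true) :: w k') = -1 := by
  obtain ⟨k₀, ⟨hk₀, hrot⟩, hunique⟩ := h.existsUnique_inverse k hk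
  rw [sum_eq_single_of_mem k₀ hk₀ fun k' hk' hne => mergeCoeff_of_not_isRotated
    (h.isCyclicallyReduced k hk) (h.isCyclicallyReduced k' hk') fun hrot' =>
      hne (hunique k' ⟨hk', hrot'⟩)]
  exact mergeCoeff_of_isRotated (h.isCyclicallyReduced k hk) (h.isCyclicallyReduced k₀ hk₀)
    (h.nodup k₀ hk₀) hrot

/-- The sum of the traces of a family of loops. -/
def loopSum [Fintype n] [DecidableEq n] (S : Finset κ) (e : κ → ι) (w : κ → List (ι × Bool))
    (U : ι → unitaryGroup n ℂ) : ℂ :=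
  ∑ k ∈ S, wordTrace U (FreeGroup.mk ((e k, true) :: w k))

@[fun_prop]
lemma continuous_loopSum [Fintype n] [DecidableEq n] (S : Finset κ) (e : κ → ι)
    (w : κ → List (ι × Bool)) :
    Continuous fun U : ι → unitaryGroup n ℂ => loopSum S e w U :=
  continuous_finsetSum S fun _ _ => continuous_wordTrace _

end LoopFamilies

section SchwingerDyson

variable {ι κ n : Type*} [DecidableEq ι] [Fintype n] [DecidableEq n]

/-- The non-constant part of the sum, over the loops `k'` of a family, of the merging terms with
the loop `k`. -/
def mergeFluctuation (S : Finset κ) (e : κ → ι) (w : κ → List (ι × Bool)) (k : κ)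
    (U : ι → unitaryGroup n ℂ) : ℂ :=
  ∑ k' ∈ S, (mergeSum (e k) ((e k, true) :: w k) ((e k', true) :: w k') U -
    mergeCoeff (e k) ((e k, true) :: w k) ((e k', true) :: w k') * Fintype.card n)

@[fun_prop]
lemma continuous_mergeFluctuation (S : Finset κ) (e : κ → ι) (w : κ → List (ι × Bool)) (k : κ) :
    Continuous fun U : ι → unitaryGroup n ℂ => mergeFluctuation S e w k U := by
  unfold mergeFluctuation
  fun_prop

variable [Countable ι] [MeasurableSpace (unitaryGroup n ℂ)] [BorelSpace (unitaryGroup n ℂ)]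
  (P : Measure (ι → unitaryGroup n ℂ)) [IsProbabilityMeasure P] [P.IsMulLeftInvariant]
  {S : Finset κ} {e : κ → ι} {w : κ → List (ι × Bool)}

lemma IsReversibleLoopFamily.card_mul_integral_cexp_mul_wordTrace_sub
    (h : IsReversibleLoopFamily S e w) {k : κ} (hk : k ∈ S) (z : ℂ) :
    Fintype.card n * (∫ U, Complex.exp (z * loopSum S e w U) *
        wordTrace U (FreeGroup.mk ((e k, true) :: w k)) ∂P -
      z * ∫ U, Complex.exp (z * loopSum S e w U) ∂P) =
    -(∫ U, Complex.exp (z * loopSum S e w U) * properSplitSum (e k) (w k) U ∂P +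
      z * ∫ U, Complex.exp (z * loopSum S e w U) * mergeFluctuation S e w k U ∂P) := by
  set f := fun U : ι → unitaryGroup n ℂ => Complex.exp (z * loopSum S e w U)
  set T := fun U : ι → unitaryGroup n ℂ => wordTrace U (FreeGroup.mk ((e k, true) :: w k)) with hT
  set R := fun U : ι → unitaryGroup n ℂ => properSplitSum (e k) (w k) U with hR
  set M := fun U : ι → unitaryGroup n ℂ => mergeFluctuation S e w k U with hM
  have hfcont : Continuous f := by fun_prop
  have hTcont : Continuous T := by fun_prop
  have hRcont : Continuous R := by fun_prop
  have hMcont : Continuous M := by fun_prop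
  have expand (U : ι → unitaryGroup n ℂ) :
      f U * (splitSum (e k) ((e k, true) :: w k) U +
        z * ∑ k' ∈ S, mergeSum (e k) ((e k, true) :: w k) ((e k', true) :: w k') U) =
      Fintype.card n * (f U * T U - z * f U) + (f U * R U + z * (f U * M U)) := by
    simp only [hM, hR, hT, mergeFluctuation, sum_sub_distrib, ← sum_mul, ← Int.cast_sum,
      h.sum_mergeCoeff hk, splitSum_cons_true]
    push_cast
    ring
  have schwinger_dyson :
      ∫ U, Fintype.card n * (f U * T U - z * f U) + (f U * R U + z * (f U * M U)) ∂P = 0 := by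
    simp only [← expand]
    exact integral_cexp_mul_splitSum_add P S z (fun k' => (e k', true) :: w k') (e k) _
  have integrable {g : (ι → unitaryGroup n ℂ) → ℂ} (hg : Continuous g) : Integrable g P :=
    integrable_of_continuous hg
  rw [integral_add (integrable (by fun_prop)) (integrable (by fun_prop)), integral_const_mul,
    integral_sub (integrable (by fun_prop)) (integrable (by fun_prop)), integral_const_mul,
    integral_add (integrable (by fun_prop)) (integrable (by fun_prop)), integral_const_mul]
    at schwinger_dyson
  exact eq_neg_of_add_eq_zero_left schwinger_dyson

end SchwingerDyson

section Stein

variable {ι : Type*} [DecidableEq ι] [Countable ι]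
  [∀ N : ℕ, MeasurableSpace (unitaryGroup (Fin N) ℂ)]
  [∀ N : ℕ, BorelSpace (unitaryGroup (Fin N) ℂ)]
  {P : ∀ N : ℕ, Measure (ι → unitaryGroup (Fin N) ℂ)} [∀ N, IsProbabilityMeasure (P N)]
  [∀ N, (P N).IsMulLeftInvariant]

lemma uniformlyBoundedLp_mergeSum_sub (e : ι) (u v : List (ι × Bool)) :
    UniformlyBoundedLp (fun N (U : ι → unitaryGroup (Fin N) ℂ) =>
      mergeSum e u v U - mergeCoeff e u v * N) 2 P := by
  have expand (N : ℕ) (U : ι → unitaryGroup (Fin N) ℂ) :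
      mergeSum e u v U - mergeCoeff e u v * N = ((cuts e v).map fun c =>
        if FreeGroup.mk u * (FreeGroup.mk c.right * FreeGroup.mk c.left) = 1 then 0 else
          c.sign •
            wordTrace U (FreeGroup.mk u * (FreeGroup.mk c.right * FreeGroup.mk c.left))).sum := by
    rw [mergeSum, mergeCoeff]
    induction cuts e v with
    | nil => simp
    | cons c l ih =>
      simp only [List.map_cons, List.sum_cons, ← ih]
      split_ifs with h
      · rw [h, wordTrace_one, Fintype.card_fin, Units.smul_def, zsmul_eq_mul]
        push_cast
        ring
      · push_cast
        ring
  simp only [expand]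
  refine .list_sum one_le_two fun c _ => ?_
  split_ifs with h
  · exact .zero
  · exact (uniformlyBoundedLp_wordTrace h).of_norm_le (C := 1)
      (fun N => ((continuous_wordTrace _).const_smul c.sign).aestronglyMeasurable)
      fun N U => by rw [norm_units_zsmul, one_mul]

variable {κ : Type*} {S : Finset κ} {e : κ → ι} {w : κ → List (ι × Bool)}

lemma uniformlyBoundedLp_mergeFluctuation (S : Finset κ) (e : κ → ι) (w : κ → List (ι × Bool))
    (k : κ) :
    UniformlyBoundedLp (fun N (U : ι → unitaryGroup (Fin N) ℂ) => mergeFluctuation S e w k U) 1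
      P := by
  simp only [mergeFluctuation, Fintype.card_fin]
  exact (UniformlyBoundedLp.finset_sum one_le_two fun k' _ =>
    uniformlyBoundedLp_mergeSum_sub (e k) _ ((e k', true) :: w k')).mono_exponent one_le_two

omit [DecidableEq ι] in
theorem IsReversibleLoopFamily.exists_norm_integral_cexp_mul_wordTrace_sub_le
    (h : IsReversibleLoopFamily S e w) {k : κ} (hk : k ∈ S) :
    ∃ C : ℝ≥0, ∀ (N : ℕ) (z : ℂ),
      (∀ U : ι → unitaryGroup (Fin N) ℂ, ‖Complex.exp (z * loopSum S e w U)‖ ≤ 1) →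
      N * ‖∫ U, Complex.exp (z * loopSum S e w U) *
          wordTrace U (FreeGroup.mk ((e k, true) :: w k)) ∂P N -
        z * ∫ U, Complex.exp (z * loopSum S e w U) ∂P N‖ ≤ C * (1 + ‖z‖) := by
  classical
  obtain ⟨A, hA⟩ := (uniformlyBoundedLp_properSplitSum (P := P)
    (h.isCyclicallyReduced k hk)).exists_norm_integral_mul_le
  obtain ⟨B, hB⟩ := (uniformlyBoundedLp_mergeFluctuation (P := P) S e w
    k).exists_norm_integral_mul_le
  refine ⟨A + B, fun N z hf => ?_⟩
  have stein := congrArg norm (h.card_mul_integral_cexp_mul_wordTrace_sub (P N) hk z)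
  rw [norm_mul, Fintype.card_fin, Complex.norm_natCast, norm_neg] at stein
  calc
    _ = _ := stein
    _ ≤ A + ‖z‖ * B := (norm_add_le _ _).trans (add_le_add (hA N _ hf)
        ((norm_mul _ _).trans_le (mul_le_mul_of_nonneg_left (hB N _ hf) (norm_nonneg z))))
    _ ≤ (A + B) * (1 + ‖z‖) := by
        nlinarith only [A.2, B.2, norm_nonneg z, mul_nonneg A.2 (norm_nonneg z)]
    _ = (A + B : ℝ≥0) * (1 + ‖z‖) := by rw [NNReal.coe_add]

end Stein

/-! ### Convergence to a Gaussian from an approximate differential equation -/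

section CharFun

lemma norm_mul_exp_sub_le {φ : ℝ → ℂ} (hφ : Differentiable ℝ φ) {v ε : ℝ} (hv : 0 ≤ v)
    (h : ∀ s, ‖deriv φ s + v * s * φ s‖ ≤ ε * (1 + |s|)) (s : ℝ) :
    ‖φ s * Real.exp (v * s ^ 2 / 2) - φ 0‖ ≤
      ε * ((1 + |s|) * Real.exp (v * s ^ 2 / 2) * |s|) := by
  have hε : 0 ≤ ε := by simpa using (norm_nonneg _).trans (h 0)
  have hderiv (t : ℝ) : HasDerivAt (fun t : ℝ => φ t * (Real.exp (v * t ^ 2 / 2) : ℂ))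
      ((deriv φ t + v * t * φ t) * Real.exp (v * t ^ 2 / 2)) t := by
    have hexp : HasDerivAt (fun t => Real.exp (v * t ^ 2 / 2))
        (Real.exp (v * t ^ 2 / 2) * (v * t)) t := by
      refine (((hasDerivAt_pow 2 t).const_mul v).div_const 2).exp.congr_deriv ?_
      push_cast
      ring
    refine ((hφ t).hasDerivAt.mul hexp.ofReal_comp).congr_deriv ?_
    push_cast
    ring
  have hbound : ∀ t ∈ Set.Icc (-|s|) |s|,
      ‖(deriv φ t + v * t * φ t) * Real.exp (v * t ^ 2 / 2)‖ ≤
        ε * ((1 + |s|) * Real.exp (v * s ^ 2 / 2)) := fun t ht => by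
    have hts : |t| ≤ |s| := abs_le.2 ht
    rw [norm_mul, Complex.norm_of_nonneg (Real.exp_nonneg _), ← mul_assoc]
    have := sq_le_sq.2 hts
    exact mul_le_mul ((h t).trans (by gcongr)) (by gcongr) (Real.exp_nonneg _) (by positivity)
  simpa [mul_assoc] using Convex.norm_image_sub_le_of_norm_hasDerivWithin_le
    (fun t _ => (hderiv t).hasDerivWithinAt) hbound (convex_Icc (-|s|) |s|)
    (⟨by simp, by simp⟩ : (0 : ℝ) ∈ Set.Icc (-|s|) |s|) (abs_le.1 le_rfl : s ∈ Set.Icc (-|s|) |s|)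

theorem tendsto_gaussianReal_of_deriv_charFun {ν : ℕ → ProbabilityMeasure ℝ} {v : ℝ≥0} {ε : ℕ → ℝ}
    (hν : ∀ n, Differentiable ℝ (charFun (ν n : Measure ℝ))) (hε : Tendsto ε atTop (nhds 0))
    (h : ∀ᶠ n in atTop, ∀ s,
      ‖deriv (charFun (ν n : Measure ℝ)) s + (v : ℝ) * s * charFun (ν n : Measure ℝ) s‖ ≤
        ε n * (1 + |s|)) :
    Tendsto ν atTop (nhds ⟨gaussianReal 0 v, inferInstance⟩) := by
  refine ProbabilityMeasure.tendsto_iff_tendsto_charFun.2 fun s => ?_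
  have hlim : Tendsto (fun n => charFun (ν n : Measure ℝ) s * Real.exp (v * s ^ 2 / 2)) atTop
      (nhds 1) := by
    rw [tendsto_iff_norm_sub_tendsto_zero]
    refine squeeze_zero' (.of_forall fun _ => norm_nonneg _) ?_
      (by simpa using hε.mul_const ((1 + |s|) * Real.exp (v * s ^ 2 / 2) * |s|))
    filter_upwards [h] with n hn
    simpa using norm_mul_exp_sub_le (hν n) v.2 hn s
  have hexp : (Real.exp (v * s ^ 2 / 2) : ℂ) ≠ 0 := mod_cast (Real.exp_pos _).ne'
  have hlim' := hlim.div_const (Real.exp (v * s ^ 2 / 2) : ℂ)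
  simp only [mul_div_cancel_right₀ _ hexp] at hlim'
  simpa [charFun_gaussianReal, Complex.exp_neg] using hlim'

lemma hasDerivAt_charFun_map {Ω : Type*} [MeasurableSpace Ω] {P : Measure Ω}
    [IsProbabilityMeasure P] {X : Ω → ℝ} (hX : Integrable X P) (s : ℝ) :
    HasDerivAt (charFun (P.map X))
      (Complex.I * ∫ ω, X ω * Complex.exp (s * X ω * Complex.I) ∂P) s := by
  have := Measure.isProbabilityMeasure_map hX.aemeasurable
  have hinteg : MemLp id (1 : ℕ) (P.map X) := by
    simpa [memLp_one_iff_integrable] using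
      (integrable_map_measure aestronglyMeasurable_id hX.aemeasurable).2 hX
  have hderiv := ((contDiff_charFun hinteg).differentiable (by simp) s).hasDerivAt
  rw [← iteratedDeriv_one, iteratedDeriv_charFun hinteg] at hderiv
  rw [integral_map hX.aemeasurable (by fun_prop)] at hderiv
  simpa using hderiv

end CharFun

section LoopLimit

variable {ι κ : Type*} {S : Finset κ} {e : κ → ι} {w : κ → List (ι × Bool)} {a : ℝ}

lemma continuous_of_ofReal_eq_mul_loopSum {n : Type*} [Fintype n] [DecidableEq n]
    {X : (ι → unitaryGroup n ℂ) → ℝ} (hX : ∀ U, (X U : ℂ) = a * loopSum S e w U) :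
    Continuous X := by
  rw [Complex.isometry_ofReal.isEmbedding.continuous_iff]
  exact ((continuous_loopSum S e w).const_mul (a : ℂ)).congr fun U => (hX U).symm

variable [Countable ι]

lemma deriv_charFun_map_add {n : Type*} [Fintype n] [DecidableEq n]
    [MeasurableSpace (unitaryGroup n ℂ)] [BorelSpace (unitaryGroup n ℂ)]
    {P : Measure (ι → unitaryGroup n ℂ)} [IsProbabilityMeasure P]
    {X : (ι → unitaryGroup n ℂ) → ℝ} (hX : ∀ U, (X U : ℂ) = a * loopSum S e w U) (s : ℝ) :
    deriv (charFun (P.map X)) s + (a ^ 2 * #S : ℝ) * s * charFun (P.map X) s =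
      Complex.I * a * ∑ k ∈ S,
        (∫ U, Complex.exp (s * a * Complex.I * loopSum S e w U) *
            wordTrace U (FreeGroup.mk ((e k, true) :: w k)) ∂P -
          s * a * Complex.I * ∫ U, Complex.exp (s * a * Complex.I * loopSum S e w U) ∂P) := by
  have hXcont := continuous_of_ofReal_eq_mul_loopSum hX
  have hexp (U : ι → unitaryGroup n ℂ) : Complex.exp (s * X U * Complex.I) =
      Complex.exp (s * a * Complex.I * loopSum S e w U) := by
    rw [hX]
    ring_nf
  have hderiv : ∫ U, X U * Complex.exp (s * a * Complex.I * loopSum S e w U) ∂P =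
      a * ∑ k ∈ S, ∫ U, Complex.exp (s * a * Complex.I * loopSum S e w U) *
        wordTrace U (FreeGroup.mk ((e k, true) :: w k)) ∂P := by
    rw [← integral_finsetSum _ fun k _ => integrable_of_continuous (by fun_prop),
      ← integral_const_mul]
    refine integral_congr_ae (.of_forall fun U => ?_)
    simp only [hX, ← mul_sum]
    rw [← loopSum]
    ring
  rw [(hasDerivAt_charFun_map (integrable_of_continuous hXcont) s).deriv, charFun_apply_real,
    integral_map hXcont.aemeasurable (by fun_prop)]
  simp only [hexp, hderiv, sum_sub_distrib, sum_const, nsmul_eq_mul]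
  push_cast
  linear_combination ((a : ℂ) ^ 2 * #S * s *
    ∫ U, Complex.exp (s * a * Complex.I * loopSum S e w U) ∂P) * Complex.I_mul_I

variable [∀ N : ℕ, MeasurableSpace (unitaryGroup (Fin N) ℂ)]
  [∀ N : ℕ, BorelSpace (unitaryGroup (Fin N) ℂ)]
  {P : ∀ N : ℕ, Measure (ι → unitaryGroup (Fin N) ℂ)} [∀ N, IsProbabilityMeasure (P N)]
  [∀ N, (P N).IsMulLeftInvariant]

lemma IsReversibleLoopFamily.exists_norm_deriv_charFun_map_add_le
    (h : IsReversibleLoopFamily S e w) (a : ℝ) :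
    ∃ C : ℝ≥0, ∀ (N : ℕ) (X : (ι → unitaryGroup (Fin N) ℂ) → ℝ),
      (∀ U, (X U : ℂ) = a * loopSum S e w U) → ∀ s : ℝ,
        N * ‖deriv (charFun ((P N).map X)) s +
          (a ^ 2 * #S : ℝ) * s * charFun ((P N).map X) s‖ ≤ C * (1 + |s|) := by
  choose! C hC using fun k hk =>
    h.exists_norm_integral_cexp_mul_wordTrace_sub_le (P := P) (k := k) hk
  refine ⟨‖a‖₊ * (∑ k ∈ S, C k) * (1 + ‖a‖₊), fun N X hX s => ?_⟩
  have hexp (U : ι → unitaryGroup (Fin N) ℂ) :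
      ‖Complex.exp (s * a * Complex.I * loopSum S e w U)‖ ≤ 1 := by
    have : s * a * Complex.I * loopSum S e w U = (s * X U : ℝ) * Complex.I := by
      rw [Complex.ofReal_mul, hX]
      ring
    rw [this, Complex.norm_exp_ofReal_mul_I]
  have hz : ‖(s * a * Complex.I : ℂ)‖ = |a| * |s| := by simp [mul_comm]
  rw [deriv_charFun_map_add hX, norm_mul, norm_mul, Complex.norm_I, one_mul, Complex.norm_real,
    Real.norm_eq_abs, mul_left_comm]
  calc
    _ ≤ |a| * ∑ k ∈ S, C k * (1 + |a| * |s|) := by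
        refine mul_le_mul_of_nonneg_left ?_ (abs_nonneg a)
        refine (mul_le_mul_of_nonneg_left (norm_sum_le _ _) N.cast_nonneg).trans ?_
        rw [mul_sum]
        exact sum_le_sum fun k hk => hz ▸ hC k hk N _ hexp
    _ ≤ |a| * ∑ k ∈ S, C k * ((1 + |a|) * (1 + |s|)) := by
        gcongr
        nlinarith only [abs_nonneg a, abs_nonneg s]
    _ = _ := by
        rw [← sum_mul]
        push_cast
        rw [Real.norm_eq_abs]
        ring

theorem IsReversibleLoopFamily.tendstoInDistribution_gaussianReal
    (h : IsReversibleLoopFamily S e w) {X : ∀ N : ℕ, (ι → unitaryGroup (Fin N) ℂ) → ℝ}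
    (hX : ∀ N U, (X N U : ℂ) = a * loopSum S e w U) {v : ℝ≥0} (hv : (v : ℝ) = a ^ 2 * #S) :
    TendstoInDistribution X atTop id P (gaussianReal 0 v) where
  forall_aemeasurable N := (continuous_of_ofReal_eq_mul_loopSum (hX N)).aemeasurable
  tendsto := by
    obtain ⟨C, hC⟩ := h.exists_norm_deriv_charFun_map_add_le (P := P) a
    simp only [Measure.map_id]
    refine tendsto_gaussianReal_of_deriv_charFun (fun N => ?_)
      (tendsto_const_div_atTop_nhds_zero_nat (C : ℝ)) ?_
    · exact fun s => (hasDerivAt_charFun_map (integrable_of_continuous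
        (continuous_of_ofReal_eq_mul_loopSum (hX N))) s).differentiableAt
    · filter_upwards [eventually_gt_atTop 0] with N hN s
      rw [hv, div_mul_eq_mul_div, le_div_iff₀' (Nat.cast_pos.2 hN)]
      exact hC N (X N) (hX N) s

end LoopLimit

/-! ### Plaquettes -/

section Plaquettes

variable {D L : ℕ}

/-- The first edge of the plaquette word `plaquetteWord p`. -/
def plaquetteEdge (p : Site D L × Fin D × Fin D) : Edge D L := (shift p.1 p.2.1, p.2.2)

/-- The last three letters of the plaquette word `plaquetteWord p`. -/
def plaquetteTail (p : Site D L × Fin D × Fin D) : List (Edge D L × Bool) :=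
  [((p.1, p.2.1), true), ((p.1, p.2.2), false), ((shift p.1 p.2.2, p.2.1), false)]

/-- The word around the plaquette at the site `p.1` in the plane of the directions
`p.2.1` and `p.2.2`. -/
def plaquetteWord (p : Site D L × Fin D × Fin D) : List (Edge D L × Bool) :=
  (plaquetteEdge p, true) :: plaquetteTail p

/-- The same plaquette with the opposite orientation. -/
def plaquetteFlip (p : Site D L × Fin D × Fin D) : Site D L × Fin D × Fin D :=
  (p.1, p.2.2, p.2.1)

lemma invRev_plaquetteWord (p : Site D L × Fin D × Fin D) :
    FreeGroup.invRev (plaquetteWord p) = plaquetteWord (plaquetteFlip p) := by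
  simp [plaquetteWord, plaquetteEdge, plaquetteTail, plaquetteFlip, FreeGroup.invRev]

lemma plaquetteWord_isRotated_iff {p q : Site D L × Fin D × Fin D} :
    plaquetteWord p ~r plaquetteWord q ↔ p = q := by
  refine ⟨fun h => ?_, fun h => h ▸ .refl _⟩
  obtain ⟨x, μ, ν⟩ := p
  obtain ⟨y, μ', ν'⟩ := q
  obtain ⟨m, hm, h⟩ := List.isRotated_iff_mod.1 h
  simp only [plaquetteWord, plaquetteEdge, plaquetteTail, List.length_cons, List.length_nil] at hm h
  interval_cases m <;> simp_all [List.rotate_cons_succ]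

lemma isCyclicallyReduced_plaquetteWord {p : Site D L × Fin D × Fin D} (hp : p.2.1 ≠ p.2.2) :
    FreeGroup.IsCyclicallyReduced (plaquetteWord p) := by
  simp [FreeGroup.IsCyclicallyReduced, FreeGroup.isReduced_cons_cons, plaquetteWord, plaquetteEdge,
    plaquetteTail, hp, hp.symm]

lemma nodup_plaquetteWord {p : Site D L × Fin D × Fin D} (hp : p.2.1 ≠ p.2.2) :
    (plaquetteWord p).Nodup := by
  simp [plaquetteWord, plaquetteEdge, plaquetteTail, hp, hp.symm]

variable [NeZero L]

/-- The oriented plaquettes of the lattice. -/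
def orientedPlaquettes (D L : ℕ) [NeZero L] : Finset (Site D L × Fin D × Fin D) :=
  univ ×ˢ univ.offDiag

lemma mem_orientedPlaquettes {p : Site D L × Fin D × Fin D} :
    p ∈ orientedPlaquettes D L ↔ p.2.1 ≠ p.2.2 := by
  simp [orientedPlaquettes]

lemma card_orientedPlaquettes : #(orientedPlaquettes D L) = L ^ D * (D * (D - 1)) := by
  simp [orientedPlaquettes, offDiag_card, ZMod.card, Nat.mul_sub]

lemma isReversibleLoopFamily_orientedPlaquettes :
    IsReversibleLoopFamily (orientedPlaquettes D L) plaquetteEdge plaquetteTail where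
  isCyclicallyReduced _ hp := isCyclicallyReduced_plaquetteWord (mem_orientedPlaquettes.1 hp)
  nodup _ hp := nodup_plaquetteWord (mem_orientedPlaquettes.1 hp)
  existsUnique_inverse p hp := by
    have rotated_iff (q : Site D L × Fin D × Fin D) :
        plaquetteWord q ~r FreeGroup.invRev (plaquetteWord p) ↔ q = plaquetteFlip p := by
      rw [invRev_plaquetteWord, plaquetteWord_isRotated_iff]
    exact ⟨plaquetteFlip p, ⟨mem_orientedPlaquettes.2 (mem_orientedPlaquettes.1 hp).symm,
      (rotated_iff _).2 rfl⟩, fun q hq => (rotated_iff q).1 hq.2⟩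

end Plaquettes

/-! ### The Wilson action as a sum of traces -/

section WilsonAction

variable {D L : ℕ}

lemma wordTrace_plaquetteWord {N : ℕ} (U : Conf D L N) (x : Site D L) (μ ν : Fin D) :
    wordTrace U (FreeGroup.mk (plaquetteWord (x, μ, ν))) =
      trace ((U (x, ν) : Matrix (Fin N) (Fin N) ℂ)ᴴ
        * (U (shift x ν, μ) : Matrix (Fin N) (Fin N) ℂ)ᴴ
        * (U (shift x μ, ν) : Matrix (Fin N) (Fin N) ℂ)
        * (U (x, μ) : Matrix (Fin N) (Fin N) ℂ)) := by
  rw [mul_assoc _ _ (U (x, μ) : Matrix (Fin N) (Fin N) ℂ), trace_mul_comm]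
  simp only [wordTrace, wordMatrix, plaquetteWord, plaquetteEdge, plaquetteTail,
    FreeGroup.lift_mk]
  simp [star_eq_conjTranspose, mul_assoc]

lemma wordTrace_plaquetteWord_swap {N : ℕ} (U : Conf D L N) (x : Site D L) (μ ν : Fin D) :
    wordTrace U (FreeGroup.mk (plaquetteWord (x, ν, μ))) =
      starRingEnd ℂ (wordTrace U (FreeGroup.mk (plaquetteWord (x, μ, ν)))) := by
  rw [← wordTrace_inv, FreeGroup.inv_mk, invRev_plaquetteWord]
  rfl

lemma sum_offDiag_eq_sum_filter_lt {α M : Type*} [Fintype α] [LinearOrder α] [AddCommMonoid M]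
    (f : α × α → M) :
    ∑ p ∈ univ.offDiag, f p = ∑ p : α × α with p.1 < p.2, (f p + f p.swap) := by
  rw [sum_add_distrib, ← sum_filter_add_sum_filter_not _ (fun p : α × α => p.1 < p.2)]
  congr 1
  · refine sum_congr (Finset.ext fun p => ?_) fun _ _ => rfl
    simpa using fun h : p.1 < p.2 => h.ne
  · refine sum_nbij' Prod.swap Prod.swap ?_ ?_ ?_ ?_ ?_ <;>
      simp +contextual [lt_iff_le_and_ne, eq_comm]

variable [NeZero L]

lemma loopSum_orientedPlaquettes {N : ℕ} (U : Conf D L N) :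
    loopSum (orientedPlaquettes D L) plaquetteEdge plaquetteTail U =
      2 * ∑ x : Site D L, ∑ p : Fin D × Fin D with p.1 < p.2,
        ((wordTrace U (FreeGroup.mk (plaquetteWord (x, p.1, p.2)))).re : ℂ) := by
  rw [loopSum, orientedPlaquettes, sum_product, mul_sum]
  refine sum_congr rfl fun x _ => ?_
  rw [sum_offDiag_eq_sum_filter_lt, mul_sum]
  refine sum_congr rfl fun p _ => ?_
  calc
    _ = wordTrace U (FreeGroup.mk (plaquetteWord (x, p.1, p.2))) +
        starRingEnd ℂ (wordTrace U (FreeGroup.mk (plaquetteWord (x, p.1, p.2)))) :=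
      congrArg _ (wordTrace_plaquetteWord_swap U x p.1 p.2)
    _ = _ := by rw [Complex.add_conj, Complex.ofReal_mul, Complex.ofReal_ofNat]

lemma natCast_mul_wilsonAction (N : ℕ) (U : Conf D L N) :
    ((N * wilsonAction D L N U : ℝ) : ℂ) = ((2 * (L : ℝ) ^ D)⁻¹ : ℝ) *
      loopSum (orientedPlaquettes D L) plaquetteEdge plaquetteTail U := by
  rcases N.eq_zero_or_pos with rfl | hN
  · simp [loopSum, wordTrace]
  have hN' : (N : ℂ) ≠ 0 := mod_cast hN.ne'
  rw [loopSum_orientedPlaquettes, wilsonAction]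
  simp only [← wordTrace_plaquetteWord, ← mul_sum]
  push_cast
  field_simp

end WilsonAction

/-- **Concentration of the lattice Yang–Mills action.**
If `μ_N` is the product over all edges of the Haar probability measures on `U(N)` and
`ρ_N` is the pushforward of `μ_N` by the normalized Wilson action `t`, then the rescaled
measures `ρ_N(N t)` — i.e. the pushforwards of `μ_N` under `N·t` — converge weakly, as
`N → ∞`, to the centered Gaussian of variance `D(D-1)/(4K)`, whose density is
`√(2K/(π D(D−1))) · exp(−2K t²/(D(D−1)))`. -/
theorem wilson_action_law_tendsto_gaussian
    (D L : ℕ) [NeZero L] (hD : 2 ≤ D) (hL : 1 ≤ L)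
    (haarU : ∀ N : ℕ, Measure (Matrix.unitaryGroup (Fin N) ℂ))
    [∀ N, (haarU N).IsHaarMeasure] [∀ N, IsProbabilityMeasure (haarU N)] :
    ∀ f : BoundedContinuousFunction ℝ ℝ,
      Tendsto
        (fun N : ℕ => ∫ t, f t ∂((confMeasure D L N (haarU N)).map
          (fun U => (N : ℝ) * wilsonAction D L N U)))
        atTop
        (nhds (∫ t, f t ∂(gaussianReal 0
          (((D * (D - 1) : ℕ) : ℝ≥0) / ((4 * L ^ D : ℕ) : ℝ≥0))))) := by
  intro f
  have : ∀ N, IsProbabilityMeasure (confMeasure D L N (haarU N)) := fun N =>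
    inferInstanceAs (IsProbabilityMeasure (Measure.pi _))
  have : ∀ N, (confMeasure D L N (haarU N)).IsMulLeftInvariant := fun N =>
    inferInstanceAs (Measure.IsMulLeftInvariant (Measure.pi _))
  have variance_eq : (((D * (D - 1) : ℕ) : ℝ≥0) / ((4 * L ^ D : ℕ) : ℝ≥0) : ℝ) =
      (2 * (L : ℝ) ^ D)⁻¹ ^ 2 * #(orientedPlaquettes D L) := by
    have hL0 : (L : ℝ) ^ D ≠ 0 := pow_ne_zero _ (NeZero.ne _)
    rw [card_orientedPlaquettes]
    generalize D * (D - 1) = m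
    push_cast
    field_simp
    norm_num
  have gaussian_limit :=
    isReversibleLoopFamily_orientedPlaquettes.tendstoInDistribution_gaussianReal
      (P := fun N => confMeasure D L N (haarU N))
      (X := fun N U => N * wilsonAction D L N U)
      natCast_mul_wilsonAction (mod_cast variance_eq)
  simpa using ProbabilityMeasure.tendsto_iff_forall_integral_tendsto.1 gaussian_limit.tendsto f

end
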